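/- Let γ ∈ R^+ \ Δ and u ∈ W satisfy ℓ(us_γ) = ℓ(u) + 1 − ⟨2ρ, γ^∨⟩. Then ℓ(s_γ) = ⟨2ρ, γ^∨⟩ − 1. Moreover, for any 1 ≤ j ≤ n with ⟨α_j, γ^∨⟩ > 0, setting β := s_j(γ), all of the following hold: ℓ(us_j) = ℓ(u) − 1, ℓ(us_js_β) = ℓ(us_j) − ℓ(s_β), and ℓ(us_γ) = ℓ(us_js_βs_j) = ℓ(us_js_β) − 1. -/

import Mathlib

/-!
Two inequalities carry the proof. Let `Inv w` be the set of positive roots that `w` makes negative.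

* `ℓ(w) ≤ |Inv w|` (`len_le_card_inv`): by the exchange argument, a nontrivial `w` sends some
  simple root `α_j` to a negative root, and then `|Inv (w s_j)| < |Inv w|`.
* `|Inv s_γ| + 1 ≤ ⟨2ρ, γ^∨⟩` for a positive root `γ` (`card_inv_refl`): in
  `⟨2ρ, γ^∨⟩ = ∑_{β > 0} ⟨β, γ^∨⟩` the roots outside `Inv s_γ` cancel in pairs under `s_γ`, each
  root of `Inv s_γ` contributes at least `1`, and `γ` itself contributes `2`.

Hence `ℓ(s_γ) ≤ ⟨2ρ, γ^∨⟩ - 1`, while the hypothesis and the triangle inequality give `≥`.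
If `k = ⟨α_j, γ^∨⟩ > 0` and `β = s_j γ`, then `β > 0` and `⟨2ρ, β^∨⟩ = ⟨2ρ, γ^∨⟩ - k ⟨2ρ, α_j^∨⟩`
is at most `⟨2ρ, γ^∨⟩ - 2`, so `ℓ(s_β) ≤ ℓ(s_γ) - 2`. Passing from `u` to
`u s_γ = u s_j s_β s_j` then lowers the length by at most `1 + ℓ(s_β) + 1 ≤ ℓ(s_γ)`; since the
total drop is exactly `ℓ(s_γ)`, every step is as large as possible.
-/

open scoped BigOperators

/-- A reduced crystallographic root system with a fixed base `α_1, …, α_n` of simple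
roots, bundled with its Weyl group `W`.  A root `γ` is recorded by its integer
coordinate vector in the basis of simple roots (so the `i`-th simple root is
`Pi.single i 1`), and `cor γ` is the coordinate vector of the coroot `γ^∨` in the
basis of simple coroots (hence `cor γ i = ⟨χ_i, γ^∨⟩` for the fundamental weights
`χ_i`).  `A i j = ⟨α_i, α_j^∨⟩` is the Cartan matrix, `σ γ` is the reflection `s_γ`
and `act` is the action of the Weyl group on the root lattice. -/
structure RootSystemData (n : ℕ) where
  A : Fin n → Fin n → ℤ
  R : Finset (Fin n → ℤ)
  cor : (Fin n → ℤ) → (Fin n → ℤ)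
  W : Type
  [grp : Group W]
  σ : (Fin n → ℤ) → W
  act : W → (Fin n → ℤ) → (Fin n → ℤ)
  simple_mem : ∀ i : Fin n, (Pi.single i 1 : Fin n → ℤ) ∈ R
  root_ne_zero : ∀ γ ∈ R, γ ≠ 0
  neg_mem : ∀ γ ∈ R, -γ ∈ R
  pos_or_neg : ∀ γ ∈ R, (∀ i, 0 ≤ γ i) ∨ (∀ i, γ i ≤ 0)
  reduced : ∀ γ ∈ R, ∀ k : ℤ, k • γ ∈ R → k = 1 ∨ k = -1
  cor_simple : ∀ i : Fin n, cor (Pi.single i 1) = Pi.single i 1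
  cor_neg : ∀ γ ∈ R, cor (-γ) = -(cor γ)
  pair_self : ∀ γ ∈ R, (∑ i, ∑ j, γ i * A i j * cor γ j) = 2
  act_one : ∀ x, act 1 x = x
  act_mul : ∀ w w' x, act (w * w') x = act w (act w' x)
  act_refl : ∀ γ ∈ R, ∀ x, act (σ γ) x = x - (∑ i, ∑ j, x i * A i j * cor γ j) • γ
  act_mem : ∀ (w : W), ∀ γ ∈ R, act w γ ∈ R
  cor_refl : ∀ γ ∈ R, ∀ β ∈ R,
    cor (act (σ γ) β) = cor β - (∑ i, ∑ j, γ i * A i j * cor β j) • cor γ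
  refl_sq : ∀ γ ∈ R, σ γ * σ γ = 1
  refl_act : ∀ (w : W), ∀ γ ∈ R, σ (act w γ) = w * σ γ * w⁻¹
  act_faithful : ∀ w w' : W, (∀ γ ∈ R, act w γ = act w' γ) → w = w'
  generated : ∀ w : W, ∃ l : List (Fin n), w = (l.map fun i => σ (Pi.single i 1)).prod

namespace RootSystemData

instance {n : ℕ} (c : RootSystemData n) : Group c.W := c.grp

/-- the pairing `⟨x, λ⟩` between an element `x` of the root lattice (coordinates in
the basis of simple roots) and an element `λ` of the coroot lattice (coordinates in
the basis of simple coroots) -/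
def pair {n : ℕ} (c : RootSystemData n) (x lam : Fin n → ℤ) : ℤ :=
  ∑ i, ∑ j, x i * c.A i j * lam j

/-- the `i`-th simple root -/
def sroot {n : ℕ} (_c : RootSystemData n) (i : Fin n) : Fin n → ℤ := Pi.single i 1

/-- the simple reflection `s_i` -/
def s {n : ℕ} (c : RootSystemData n) (i : Fin n) : c.W := c.σ (c.sroot i)

/-- `s_{α_{t+1}}` for a `0`-based natural number index `t` (`= 1` when out of range) -/
def sN {n : ℕ} (c : RootSystemData n) (t : ℕ) : c.W := if h : t < n then c.s ⟨t, h⟩ else 1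

/-- `⟨2ρ, λ⟩ = Σ_{β ∈ R^+} ⟨β, λ⟩`, where `ρ` is the half-sum of the positive roots -/
def pairTwoRho {n : ℕ} (c : RootSystemData n) (lam : Fin n → ℤ) : ℤ :=
  ∑ β ∈ c.R, if ∀ i, 0 ≤ β i then c.pair β lam else 0

/-- the length of `w ∈ W` with respect to the simple reflections -/
noncomputable def len {n : ℕ} (c : RootSystemData n) (w : c.W) : ℕ :=
  sInf {k | ∃ l : List (Fin n), l.length = k ∧ (l.map c.s).prod = w}

/-- the parabolic subgroup `W_S` generated by the simple reflections indexed by `S` -/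
def Wsub {n : ℕ} (c : RootSystemData n) (S : Finset (Fin n)) : Subgroup c.W :=
  Subgroup.closure (c.s '' ↑S)

/-- `w ∈ W_T^S`: `w ∈ W_T` and `w` has minimal length in the coset `w W_S` -/
def MinRep {n : ℕ} (c : RootSystemData n) (T S : Finset (Fin n)) (w : c.W) : Prop :=
  w ∈ c.Wsub T ∧ ∀ u ∈ c.Wsub S, c.len w ≤ c.len (w * u)

/-- `w` is the longest element of `W_S` -/
def IsLongest {n : ℕ} (c : RootSystemData n) (S : Finset (Fin n)) (w : c.W) : Prop :=
  w ∈ c.Wsub S ∧ ∀ v ∈ c.Wsub S, c.len v ≤ c.len w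

end RootSystemData

/-- the support of `γ` is contained in `S`, i.e. `γ` lies in the span of
`{α_i : i ∈ S}` (for a root `γ`, membership in `R_S`) -/
def suppIn {n : ℕ} (S : Finset (Fin n)) (γ : Fin n → ℤ) : Prop :=
  ∀ i, i ∉ S → γ i = 0

/-- `Δ_j` for `0 ≤ j ≤ r+1`: the index set of the first `j` simple roots for `j ≤ r`,
and all of `Δ` for `j = r+1`.  (Indices of simple roots are `0`-based, so
`α_1, …, α_j` correspond to the indices `0, …, j-1`.) -/
def deltaSet (n r j : ℕ) : Finset (Fin n) :=
  if j = r + 1 then Finset.univ else Finset.univ.filter fun i => (i : ℕ) < j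

namespace RootSystemData

/-- `v 0, …, v r` (standing for `v_1, …, v_{r+1}`) is the decomposition of `w`
associated to `(Δ_P, Υ)`:  each `v_i ∈ W_{Δ_i}^{Δ_{i-1}}` and `w = v_{r+1} v_r ⋯ v_1`. -/
def IsDecomp {n : ℕ} (c : RootSystemData n) (r : ℕ) (w : c.W)
    (v : Fin (r + 1) → c.W) : Prop :=
  (∀ k : Fin (r + 1), c.MinRep (deltaSet n r ((k : ℕ) + 1)) (deltaSet n r (k : ℕ)) (v k)) ∧
    w = (List.ofFn v).reverse.prod

/-- the first `m` simple roots `α_1, …, α_m` form a path of type `A_m`: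
`⟨α_i, α_j^∨⟩ = -1` if `|i-j| = 1` and `⟨α_i, α_j^∨⟩ = 0` if `|i-j| ≥ 2`. -/
def PathA {n : ℕ} (c : RootSystemData n) (m : ℕ) : Prop :=
  ∀ i j : Fin n, (i : ℕ) < m → (j : ℕ) < m →
    (((i : ℕ) + 1 = (j : ℕ) ∨ (j : ℕ) + 1 = (i : ℕ)) → c.A i j = -1) ∧
    ((i : ℕ) + 2 ≤ (j : ℕ) ∨ (j : ℕ) + 2 ≤ (i : ℕ) → c.A i j = 0)

/-- `u_{[k,m]} = s_k s_{k+1} ⋯ s_m` (`1`-based indices; `u_{[k,m]} = 1` for `k > m`) -/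
def uu {n : ℕ} (c : RootSystemData n) (k m : ℕ) : c.W :=
  ((List.range' k (m + 1 - k)).map fun t => c.sN (t - 1)).prod

/-- `u_i^{(m)} = s_{m-i+1} s_{m-i+2} ⋯ s_m` -/
def uElt {n : ℕ} (c : RootSystemData n) (i m : ℕ) : c.W := c.uu (m - i + 1) m

end RootSystemData

/-- strict lexicographic order on `Fin m → ℤ` -/
def lexLT {m : ℕ} (x y : Fin m → ℤ) : Prop :=
  ∃ j, x j < y j ∧ ∀ k, k < j → x k = y k

/-- lexicographic order on `Fin m → ℤ` -/
def lexLE {m : ℕ} (x y : Fin m → ℤ) : Prop := x = y ∨ lexLT x y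

/-- the grading `gr(q_{α_{j+1}^∨}) ∈ ℤ^{r+1}` (for the `0`-based index `j < r`), when
`Δ_P` is of type `A_r`: in `1`-based terms, `gr(q_{α_1^∨}) = 2·e_1` and
`gr(q_{α_j^∨}) = (1-j)·e_{j-1} + (1+j)·e_j` for `2 ≤ j ≤ r`. -/
def grQ (r j : ℕ) : Fin (r + 1) → ℤ := fun k =>
  (if (k : ℕ) = j then (j : ℤ) + 2 else 0) + (if (k : ℕ) + 1 = j then -(j : ℤ) else 0)

/-- the grading `gr(q_λ)` for `λ ∈ Q_P^∨` (coordinates in simple coroots), extended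
additively from the `gr(q_{α_j^∨})`, when `Δ_P` is of type `A_r` -/
def grQlam (n r : ℕ) (lam : Fin n → ℤ) : Fin (r + 1) → ℤ :=
  fun k => ∑ j, lam j * grQ r (j : ℕ) k

namespace RootSystemData

variable {n : ℕ} (c : RootSystemData n)

lemma pair_sub_smul_left (x y lam : Fin n → ℤ) (k : ℤ) :
    c.pair (x - k • y) lam = c.pair x lam - k * c.pair y lam := by
  simp only [pair, Finset.mul_sum, ← Finset.sum_sub_distrib]
  refine Finset.sum_congr rfl fun i _ => Finset.sum_congr rfl fun j _ => ?_
  simp only [Pi.sub_apply, Pi.smul_apply, smul_eq_mul]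
  ring

lemma pair_sub_smul_right (x lam mu : Fin n → ℤ) (k : ℤ) :
    c.pair x (lam - k • mu) = c.pair x lam - k * c.pair x mu := by
  simp only [pair, Finset.mul_sum, ← Finset.sum_sub_distrib]
  refine Finset.sum_congr rfl fun i _ => Finset.sum_congr rfl fun j _ => ?_
  simp only [Pi.sub_apply, Pi.smul_apply, smul_eq_mul]
  ring

lemma pairTwoRho_sub_smul (lam mu : Fin n → ℤ) (k : ℤ) :
    c.pairTwoRho (lam - k • mu) = c.pairTwoRho lam - k * c.pairTwoRho mu := by
  simp only [pairTwoRho, Finset.mul_sum, ← Finset.sum_sub_distrib]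
  refine Finset.sum_congr rfl fun i _ => ?_
  split_ifs
  · exact c.pair_sub_smul_right _ _ _ _
  · simp

lemma pair_cor_self {γ : Fin n → ℤ} (hγ : γ ∈ c.R) : c.pair γ (c.cor γ) = 2 :=
  c.pair_self γ hγ

lemma act_σ {γ : Fin n → ℤ} (hγ : γ ∈ c.R) (x : Fin n → ℤ) :
    c.act (c.σ γ) x = x - c.pair x (c.cor γ) • γ :=
  c.act_refl γ hγ x

lemma sroot_mem (j : Fin n) : c.sroot j ∈ c.R := c.simple_mem j

lemma sroot_nonneg (j : Fin n) : 0 ≤ c.sroot j := by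
  simp [sroot]

lemma s_mul_s (j : Fin n) : c.s j * c.s j = 1 := c.refl_sq _ (c.sroot_mem j)

lemma act_σ_self {γ : Fin n → ℤ} (hγ : γ ∈ c.R) : c.act (c.σ γ) γ = -γ := by
  rw [c.act_σ hγ, c.pair_cor_self hγ, two_smul]
  abel

/-- Linearity of `act w` is assumed only for reflections; for `-γ = s_γ γ` it follows from
`w s_γ w⁻¹ = s_{wγ}`. -/
lemma act_neg (w : c.W) {γ : Fin n → ℤ} (hγ : γ ∈ c.R) : c.act w (-γ) = -c.act w γ := by
  rw [← c.act_σ_self (c.act_mem w γ hγ), c.refl_act w γ hγ, ← c.act_mul, inv_mul_cancel_right,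
    c.act_mul, c.act_σ_self hγ]

lemma act_injective (w : c.W) : Function.Injective (c.act w) := by
  intro x y h
  have h' := congrArg (c.act w⁻¹) h
  simpa only [← c.act_mul, inv_mul_cancel, c.act_one] using h'

lemma act_σ_σ {γ : Fin n → ℤ} (hγ : γ ∈ c.R) (x : Fin n → ℤ) :
    c.act (c.σ γ) (c.act (c.σ γ) x) = x := by
  rw [← c.act_mul, c.refl_sq γ hγ, c.act_one]

lemma nonneg_neg_iff {γ : Fin n → ℤ} (hγ : γ ∈ c.R) : 0 ≤ -γ ↔ ¬ 0 ≤ γ := by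
  constructor
  · intro h1 h2
    exact c.root_ne_zero γ hγ (le_antisymm (neg_nonneg.mp h1) h2)
  · intro h
    rcases c.pos_or_neg γ hγ with h' | h'
    · exact absurd h' h
    · exact neg_nonneg.mpr h'

/-- `s_j` permutes the positive roots other than `α_j`. -/
lemma act_s_nonneg (j : Fin n) {γ : Fin n → ℤ} (hγ : γ ∈ c.R) (hpos : 0 ≤ γ)
    (hne : γ ≠ c.sroot j) : 0 ≤ c.act (c.s j) γ := by
  by_contra hneg
  have hmem := c.act_mem (c.s j) γ hγ
  have h1 := (c.nonneg_neg_iff hmem).mpr hneg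
  -- coordinates away from `j` are unchanged by `s_j`, hence vanish
  have h2 : ∀ i, i ≠ j → γ i = 0 := by
    intro i hi
    have h3 := h1 i
    have h4 := hpos i
    rw [s, c.act_σ (c.sroot_mem j)] at h3
    simp [sroot, hi] at h3 h4
    omega
  have h5 : γ = γ j • c.sroot j := by
    ext i
    by_cases hi : i = j
    · subst hi; simp [sroot]
    · simp [sroot, hi, h2 i hi]
  rcases c.reduced (c.sroot j) (c.sroot_mem j) (γ j) (h5 ▸ hγ) with h | h
  · rw [h, one_smul] at h5
    exact hne h5
  · have := hpos j
    simp only [Pi.zero_apply] at this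
    omega

/-! ### Words and lengths -/

lemma exists_word (w : c.W) :
    ∃ l : List (Fin n), l.length = c.len w ∧ (l.map c.s).prod = w := by
  obtain ⟨l, hl⟩ := c.generated w
  exact Nat.sInf_mem (s := {k | ∃ l : List (Fin n), l.length = k ∧ (l.map c.s).prod = w})
    ⟨l.length, l, rfl, hl.symm⟩

lemma len_prod_le (l : List (Fin n)) : c.len (l.map c.s).prod ≤ l.length :=
  Nat.sInf_le ⟨l, rfl, rfl⟩

lemma len_mul_le (v w : c.W) : c.len (v * w) ≤ c.len v + c.len w := by
  obtain ⟨l, hl, rfl⟩ := c.exists_word v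
  obtain ⟨m, hm, rfl⟩ := c.exists_word w
  have h := c.len_prod_le (l ++ m)
  rw [List.map_append, List.prod_append, List.length_append] at h
  omega

lemma len_s_le (j : Fin n) : c.len (c.s j) ≤ 1 := by
  simpa using c.len_prod_le [j]

/-- Multiplying by an involution lowers the length by at most the length of the involution. -/
lemma len_le_mul_add (v : c.W) {t : c.W} (ht : t * t = 1) :
    c.len v ≤ c.len (v * t) + c.len t := by
  have h := c.len_mul_le (v * t) t
  rwa [mul_assoc, ht, mul_one] at h

/-- The exchange property. -/
lemma exchange (j : Fin n) (l : List (Fin n)) (h : ¬ 0 ≤ c.act (l.map c.s).prod (c.sroot j)) :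
    ∃ l' : List (Fin n), l'.length + 1 = l.length ∧
      (l'.map c.s).prod = (l.map c.s).prod * c.s j := by
  induction l with
  | nil => exact absurd (by simpa [c.act_one] using c.sroot_nonneg j) h
  | cons i t ih =>
    simp only [List.map_cons, List.prod_cons, c.act_mul] at h
    by_cases ht : 0 ≤ c.act (t.map c.s).prod (c.sroot j)
    · have hx : c.act (t.map c.s).prod (c.sroot j) = c.sroot i := by
        by_contra hne
        exact h (c.act_s_nonneg i (c.act_mem _ _ (c.sroot_mem j)) ht hne)
      have hs : c.s i = (t.map c.s).prod * c.s j * (t.map c.s).prod⁻¹ := by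
        rw [s, ← hx, c.refl_act _ _ (c.sroot_mem j), ← s]
      refine ⟨t, by simp, ?_⟩
      simp only [List.map_cons, List.prod_cons]
      rw [hs, inv_mul_cancel_right, mul_assoc, c.s_mul_s, mul_one]
    · obtain ⟨t', h1, h2⟩ := ih ht
      refine ⟨i :: t', by simp [h1], ?_⟩
      simp only [List.map_cons, List.prod_cons, h2, mul_assoc]

lemma len_mul_s_lt {w : c.W} {j : Fin n} (h : ¬ 0 ≤ c.act w (c.sroot j)) :
    c.len (w * c.s j) < c.len w := by
  obtain ⟨l, hl, rfl⟩ := c.exists_word w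
  obtain ⟨l', h1, h2⟩ := c.exchange j l h
  have h3 := c.len_prod_le l'
  rw [h2] at h3
  omega

lemma exists_descent {w : c.W} (hw : w ≠ 1) : ∃ j, ¬ 0 ≤ c.act w (c.sroot j) := by
  obtain ⟨l, hl, rfl⟩ := c.exists_word w
  rcases List.eq_nil_or_concat l with rfl | ⟨t, j, rfl⟩
  · simp at hw
  refine ⟨j, fun hpos => ?_⟩
  have hprod : ((t.concat j).map c.s).prod = (t.map c.s).prod * c.s j := by simp
  rw [hprod] at hl hpos
  rw [c.act_mul, s, c.act_σ_self (c.sroot_mem j), c.act_neg _ (c.sroot_mem j),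
    c.nonneg_neg_iff (c.act_mem _ _ (c.sroot_mem j))] at hpos
  have h1 := c.len_mul_s_lt hpos
  have h2 := c.len_prod_le t
  simp only [List.length_concat] at hl
  omega

/-! ### Inversions -/

open Classical in
/-- The inversion set of `w`: the positive roots that `w` sends to negative roots. -/
noncomputable def Inv (w : c.W) : Finset (Fin n → ℤ) :=
  c.R.filter fun β => 0 ≤ β ∧ ¬ 0 ≤ c.act w β

lemma mem_Inv {w : c.W} {β : Fin n → ℤ} :
    β ∈ c.Inv w ↔ β ∈ c.R ∧ 0 ≤ β ∧ ¬ 0 ≤ c.act w β := by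
  classical
  simp [Inv]

lemma card_Inv_mul_s_lt {w : c.W} {j : Fin n} (h : ¬ 0 ≤ c.act w (c.sroot j)) :
    (c.Inv (w * c.s j)).card < (c.Inv w).card := by
  classical
  have hj : c.sroot j ∈ c.Inv w := c.mem_Inv.mpr ⟨c.sroot_mem j, c.sroot_nonneg j, h⟩
  refine lt_of_le_of_lt ?_ (Finset.card_erase_lt_of_mem hj)
  refine Finset.card_le_card_of_injOn (c.act (c.s j)) ?_ (c.act_injective _).injOn
  intro β hβ
  obtain ⟨hR, hpos, hneg⟩ := c.mem_Inv.mp hβ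
  have hne : β ≠ c.sroot j := by
    rintro rfl
    rw [c.act_mul, s, c.act_σ_self hR, c.act_neg _ hR,
      c.nonneg_neg_iff (c.act_mem _ _ hR)] at hneg
    exact hneg h
  refine Finset.mem_erase.mpr ⟨fun he => ?_, c.mem_Inv.mpr
    ⟨c.act_mem _ _ hR, c.act_s_nonneg j hR hpos hne, by rwa [← c.act_mul]⟩⟩
  -- `s_j β = α_j` would force `β = -α_j`, which is not positive
  have hβ' : β = -c.sroot j := by
    rw [← c.act_σ_self (c.sroot_mem j), ← s, ← he, s, c.act_σ_σ (c.sroot_mem j)]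
  rw [hβ', c.nonneg_neg_iff (c.sroot_mem j)] at hpos
  exact hpos (c.sroot_nonneg j)

lemma len_le_card_inv (w : c.W) : c.len w ≤ (c.Inv w).card := by
  induction hN : (c.Inv w).card using Nat.strong_induction_on generalizing w with
  | _ N ih =>
    by_cases hw : w = 1
    · subst hw
      have h : c.len (1 : c.W) ≤ 0 := by simpa using c.len_prod_le []
      omega
    · obtain ⟨j, hj⟩ := c.exists_descent hw
      have h1 := c.card_Inv_mul_s_lt hj
      have h2 := ih _ (hN ▸ h1) (w * c.s j) rfl
      have h3 := c.len_le_mul_add w (c.s_mul_s j)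
      have h4 := c.len_s_le j
      omega

lemma self_mem_Inv {γ : Fin n → ℤ} (hγ : γ ∈ c.R) (hpos : 0 ≤ γ) : γ ∈ c.Inv (c.σ γ) := by
  refine c.mem_Inv.mpr ⟨hγ, hpos, ?_⟩
  rw [c.act_σ_self hγ, c.nonneg_neg_iff hγ]
  exact not_not.mpr hpos

lemma card_inv_refl {γ : Fin n → ℤ} (hγ : γ ∈ c.R) (hpos : 0 ≤ γ) :
    ((c.Inv (c.σ γ)).card : ℤ) + 1 ≤ c.pairTwoRho (c.cor γ) := by
  classical
  have hflip : ∀ β, c.pair (c.act (c.σ γ) β) (c.cor γ) = -c.pair β (c.cor γ) := by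
    intro β
    rw [c.act_σ hγ, c.pair_sub_smul_left, c.pair_cor_self hγ]
    ring
  have hsplit : c.pairTwoRho (c.cor γ) =
      ∑ β ∈ c.Inv (c.σ γ), c.pair β (c.cor γ) +
      ∑ β ∈ c.R with (0 ≤ β ∧ 0 ≤ c.act (c.σ γ) β), c.pair β (c.cor γ) := by
    have h0 : c.pairTwoRho (c.cor γ) = ∑ β ∈ c.R, if 0 ≤ β then c.pair β (c.cor γ) else 0 := by
      unfold pairTwoRho
      refine Finset.sum_congr rfl fun β _ => ?_
      by_cases h : 0 ≤ β
      · exact (if_pos h).trans (if_pos h).symm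
      · exact (if_neg h).trans (if_neg h).symm
    rw [h0, Inv, Finset.sum_filter, Finset.sum_filter, ← Finset.sum_add_distrib]
    refine Finset.sum_congr rfl fun β _ => ?_
    by_cases h1 : 0 ≤ β <;> by_cases h2 : 0 ≤ c.act (c.σ γ) β <;> simp [h1, h2]
  have hzero : ∑ β ∈ c.R with (0 ≤ β ∧ 0 ≤ c.act (c.σ γ) β), c.pair β (c.cor γ) = 0 := by
    refine Finset.sum_involution (fun β _ => c.act (c.σ γ) β) ?_ ?_ ?_ ?_
    · intro β _
      rw [hflip]
      ring
    · intro β _ hne he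
      have h := hflip β
      rw [he] at h
      omega
    · intro β hβ
      rw [Finset.mem_filter] at hβ ⊢
      refine ⟨c.act_mem _ _ hβ.1, hβ.2.2, ?_⟩
      rw [c.act_σ_σ hγ]
      exact hβ.2.1
    · intro β _
      exact c.act_σ_σ hγ β
  have hone : ∀ β ∈ c.Inv (c.σ γ), 1 + (if β = γ then 1 else 0) ≤ c.pair β (c.cor γ) := by
    intro β hβ
    obtain ⟨-, hβpos, hneg⟩ := c.mem_Inv.mp hβ
    split_ifs with h
    · rw [h, c.pair_cor_self hγ]
      norm_num
    · -- if `⟨β, γ^∨⟩ ≤ 0`, then `s_γ β = β - ⟨β, γ^∨⟩ γ` is nonnegative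
      by_contra hlt
      apply hneg
      rw [c.act_σ hγ]
      intro i
      have h1 := hβpos i
      have h2 := hpos i
      simp only [Pi.zero_apply, Pi.sub_apply, Pi.smul_apply, smul_eq_mul] at h1 h2 ⊢
      nlinarith
  have hsum := Finset.sum_le_sum hone
  rw [Finset.sum_add_distrib, Finset.sum_ite_eq' (c.Inv (c.σ γ)) γ,
    if_pos (c.self_mem_Inv hγ hpos)] at hsum
  simp only [Finset.sum_const, nsmul_eq_mul, mul_one] at hsum
  rw [hsplit, hzero]
  linarith

lemma len_refl_le {γ : Fin n → ℤ} (hγ : γ ∈ c.R) (hpos : 0 ≤ γ) :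
    (c.len (c.σ γ) : ℤ) + 1 ≤ c.pairTwoRho (c.cor γ) := by
  have h1 := c.card_inv_refl hγ hpos
  have h2 := c.len_le_card_inv (c.σ γ)
  omega

lemma two_le_pairTwoRho {γ : Fin n → ℤ} (hγ : γ ∈ c.R) (hpos : 0 ≤ γ) :
    2 ≤ c.pairTwoRho (c.cor γ) := by
  have h1 := c.card_inv_refl hγ hpos
  have h2 := Finset.card_pos.mpr ⟨γ, c.self_mem_Inv hγ hpos⟩
  omega

end RootSystemData

/-- Let `γ ∈ R^+ \ Δ` and `u ∈ W` satisfy `ℓ(u s_γ) = ℓ(u) + 1 - ⟨2ρ, γ^∨⟩`.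
Then `ℓ(s_γ) = ⟨2ρ, γ^∨⟩ - 1`; and for any simple index `j` with `⟨α_j, γ^∨⟩ > 0`,
setting `β := s_j(γ)`, one has `ℓ(u s_j) = ℓ(u) - 1`,
`ℓ(u s_j s_β) = ℓ(u s_j) - ℓ(s_β)` and
`ℓ(u s_γ) = ℓ(u s_j s_β s_j) = ℓ(u s_j s_β) - 1`. -/
theorem length_descent_of_maximal_degree {n : ℕ} (c : RootSystemData n)
    (γ : Fin n → ℤ) (hγR : γ ∈ c.R) (hγpos : ∀ i, 0 ≤ γ i)
    (hγns : ∀ i : Fin n, γ ≠ c.sroot i)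
    (u : c.W)
    (hlen : (c.len (u * c.σ γ) : ℤ) = (c.len u : ℤ) + 1 - c.pairTwoRho (c.cor γ)) :
    (c.len (c.σ γ) : ℤ) = c.pairTwoRho (c.cor γ) - 1 ∧
    ∀ j : Fin n, 0 < c.pair (c.sroot j) (c.cor γ) →
      c.len (u * c.s j) + 1 = c.len u ∧
      c.len (u * c.s j * c.σ (c.act (c.s j) γ)) + c.len (c.σ (c.act (c.s j) γ)) =
        c.len (u * c.s j) ∧
      c.len (u * c.σ γ) = c.len (u * c.s j * c.σ (c.act (c.s j) γ) * c.s j) ∧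
      c.len (u * c.σ γ) + 1 = c.len (u * c.s j * c.σ (c.act (c.s j) γ)) := by
  have h1 := c.len_refl_le hγR hγpos
  have h2 := c.len_le_mul_add u (c.refl_sq γ hγR)
  refine ⟨by omega, fun j hj => ?_⟩
  have hβR : c.act (c.s j) γ ∈ c.R := c.act_mem _ _ hγR
  have h3 := c.len_refl_le hβR (c.act_s_nonneg j hγR hγpos (hγns j))
  have hcor : c.cor (c.act (c.s j) γ) =
      c.cor γ - c.pair (c.sroot j) (c.cor γ) • c.cor (c.sroot j) :=
    c.cor_refl _ (c.sroot_mem j) γ hγR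
  have h4 := c.two_le_pairTwoRho (c.sroot_mem j) (c.sroot_nonneg j)
  rw [hcor, c.pairTwoRho_sub_smul] at h3
  have h5 : 2 ≤ c.pair (c.sroot j) (c.cor γ) * c.pairTwoRho (c.cor (c.sroot j)) := by
    nlinarith
  have hs : u * c.s j * c.σ (c.act (c.s j) γ) * c.s j = u * c.σ γ := by
    have hinv : (c.s j)⁻¹ = c.s j := inv_eq_of_mul_eq_one_left (c.s_mul_s j)
    rw [c.refl_act _ _ hγR, hinv]
    calc u * c.s j * (c.s j * c.σ γ * c.s j) * c.s j
        = u * (c.s j * c.s j) * c.σ γ * (c.s j * c.s j) := by simp only [mul_assoc]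
      _ = u * c.σ γ := by simp only [c.s_mul_s, mul_one]
  have h6 := c.len_s_le j
  have h7 := c.len_le_mul_add u (c.s_mul_s j)
  have h8 := c.len_le_mul_add (u * c.s j) (c.refl_sq _ hβR)
  have h9 := c.len_le_mul_add (u * c.s j * c.σ (c.act (c.s j) γ)) (c.s_mul_s j)
  rw [hs] at h9 ⊢
  refine ⟨by omega, by omega, rfl, by omega⟩
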